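/- arXiv:1809.05460 — 2 statements merged into one kernel-verified Lean document; each statement's English description precedes it below -/
import Mathlib

section
/- Let ε ∈ ℝ* be a positive infinitesimal (0 < ε and ε < r for every positive real r). In SL(2,ℝ*) let α be the diagonal matrix with entries ε and ε⁻¹. Let D = {diag(a, a⁻¹) : a ∈ ℝ, a ≠ 0} be the diagonal subgroup of SL(2,ℝ), let b = [[1,1],[0,1]], and let H = b⁻¹Db. Then: (i) α ∈ μ·D^♯, i.e. the coset D is near α; (ii) α ∈ μ·b·H^♯, i.e. the coset bH = Db is near α; and (iii) D ∩ bH = ∅. Here μ denotes the set of elements of SL(2,ℝ)^♯ all of whose entries are infinitesimally close to those of the identity matrix. In particular, there is no smallest coset (of a real algebraic subgroup of SL(2,ℝ)) near α, so the existence of smallest near cosets fails for SL(2,ℝ). -/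
open Pointwise Filter

noncomputable section

/-- Square matrices of size `n` over `R`. -/
abbrev Mat (n : ℕ) (R : Type) : Type := Matrix (Fin n) (Fin n) R

/-- The set `UT(n,ℝ)` of upper triangular matrices with `1`s on the diagonal. -/
def UTset (n : ℕ) : Set (Mat n ℝ) :=
  {A | (∀ i, A i i = 1) ∧ ∀ i j : Fin n, (j : ℕ) < (i : ℕ) → A i j = 0}

/-- The entries of a matrix, as a point of `ℝ^(n²)`. -/
def matEval {n : ℕ} (A : Mat n ℝ) : Fin n × Fin n → ℝ := fun ij => A ij.1 ij.2

/-- A real unipotent group: a subgroup of `UT(n,ℝ)` which is the common zero set in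
`UT(n,ℝ)` of a family of real polynomials in the matrix entries. -/
def IsRealUnipotentGroup (n : ℕ) (G : Set (Mat n ℝ)) : Prop :=
  (∃ S : Set (MvPolynomial (Fin n × Fin n) ℝ),
      G = {A | A ∈ UTset n ∧ ∀ p ∈ S, MvPolynomial.eval (matEval A) p = 0}) ∧
    (1 : Mat n ℝ) ∈ G ∧ (∀ a ∈ G, ∀ b ∈ G, a * b ∈ G) ∧ ∀ a ∈ G, a⁻¹ ∈ G

/-- A real algebraic subgroup of a real unipotent group `G`. -/
def IsRealAlgSubgroup (n : ℕ) (G H : Set (Mat n ℝ)) : Prop :=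
  H ⊆ G ∧ IsRealUnipotentGroup n H

/-- `N` is a normal subgroup-set of `G`. -/
def IsNormalIn (n : ℕ) (G N : Set (Mat n ℝ)) : Prop :=
  ∀ g ∈ G, ∀ x ∈ N, g * x * g⁻¹ ∈ N

/-- `Γ` is a lattice in `G`: a discrete subgroup which is cocompact, i.e. there is a
compact `K ⊆ G` with `K·Γ = G` (equivalently, `G/Γ` is compact). -/
def IsLatticeIn (n : ℕ) (G Γ : Set (Mat n ℝ)) : Prop :=
  Γ ⊆ G ∧ (1 : Mat n ℝ) ∈ Γ ∧ (∀ a ∈ Γ, ∀ b ∈ Γ, a * b ∈ Γ) ∧ (∀ a ∈ Γ, a⁻¹ ∈ Γ) ∧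
    DiscreteTopology ↥Γ ∧
    ∃ K : Set (Mat n ℝ), K ⊆ G ∧ IsCompact K ∧ ∀ g ∈ G, ∃ k ∈ K, ∃ γ ∈ Γ, g = k * γ

/-- `H` is `Γ`-rational: `Γ ∩ H` is a lattice in `H`. -/
def IsRationalFor (n : ℕ) (Γ H : Set (Mat n ℝ)) : Prop :=
  IsLatticeIn n H (Γ ∩ H)

/-- The hyperreal matrix represented by a sequence of real matrices. -/
def matOfSeq (n : ℕ) (u : ℕ → Mat n ℝ) : Mat n Hyperreal :=
  Matrix.of fun i j => Hyperreal.ofSeq fun k => u k i j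

/-- The nonstandard extension `S^♯` of a set `S` of real matrices: hyperreal matrices
represented by sequences landing in `S` on a set of indices in the ultrafilter. -/
def matSharp (n : ℕ) (S : Set (Mat n ℝ)) : Set (Mat n Hyperreal) :=
  {A | ∃ u : ℕ → Mat n ℝ, (∀ᶠ k in hyperfilter ℕ, u k ∈ S) ∧ A = matOfSeq n u}

/-- The canonical embedding of real matrices into hyperreal matrices. -/
def matCast {n : ℕ} (A : Mat n ℝ) : Mat n Hyperreal :=
  Matrix.of fun i j => (A i j : Hyperreal)

/-- `μ(G)`: elements of `G^♯` all of whose entries are infinitesimally close to the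
corresponding entries of the identity matrix. -/
def muSet (n : ℕ) (G : Set (Mat n ℝ)) : Set (Mat n Hyperreal) :=
  {A | A ∈ matSharp n G ∧ ∀ i j, Hyperreal.Infinitesimal (A i j - (1 : Mat n Hyperreal) i j)}

/-- The coset `gH` is near `α`, i.e. `α ∈ μ(G)·g·H^♯`. -/
def NearCoset (n : ℕ) (G : Set (Mat n ℝ)) (g : Mat n ℝ) (H : Set (Mat n ℝ))
    (α : Mat n Hyperreal) : Prop :=
  α ∈ muSet n G * ({matCast g} * matSharp n H)

/-- The set of standard parts of the finite elements of a set of hyperreal matrices. -/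
def matStSet (n : ℕ) (A : Set (Mat n Hyperreal)) : Set (Mat n ℝ) :=
  {B | ∃ a ∈ A, ∀ i j, Hyperreal.IsSt (a i j) (B i j)}

/-- A polynomial map `ℝ^d → Mat n ℝ`. -/
def IsPolyMapVec (d n : ℕ) (F : (Fin d → ℝ) → Mat n ℝ) : Prop :=
  ∃ P : Fin n → Fin n → MvPolynomial (Fin d) ℝ,
    ∀ x i j, F x i j = MvPolynomial.eval x (P i j)

/-- The inclusion `ℝ →+* ℝ*` as a ring homomorphism. -/
def realHyperRingHom : ℝ →+* Hyperreal where
  toFun r := (r : Hyperreal)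
  map_one' := Hyperreal.coe_one
  map_mul' := Hyperreal.coe_mul
  map_zero' := Hyperreal.coe_zero
  map_add' := Hyperreal.coe_add

/-- A semialgebraic subset of matrix space: a finite union of sets defined by finitely
many polynomial equations and finitely many strict polynomial inequalities. -/
def IsSemialgebraic (n : ℕ) (S : Set (Mat n ℝ)) : Prop :=
  ∃ (k : ℕ) (P Q : Fin k → Finset (MvPolynomial (Fin n × Fin n) ℝ)),
    S = ⋃ t : Fin k, {A | (∀ p ∈ P t, MvPolynomial.eval (matEval A) p = 0) ∧
      ∀ q ∈ Q t, 0 < MvPolynomial.eval (matEval A) q}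


/-- `SL(2,ℝ)` as a set of real `2 × 2` matrices. -/
def SL2set : Set (Mat 2 ℝ) := {A | A.det = 1}

/-- The diagonal subgroup `D` of `SL(2,ℝ)`. -/
def Dset : Set (Mat 2 ℝ) := {A | ∃ a : ℝ, a ≠ 0 ∧ A = !![a, 0; 0, a⁻¹]}

/-- The matrix `b = [[1,1],[0,1]]`. -/
def bMat : Mat 2 ℝ := !![1, 1; 0, 1]

/-- The conjugate `H = b⁻¹Db`. -/
def Hconj : Set (Mat 2 ℝ) := {A | ∃ dm ∈ Dset, A = bMat⁻¹ * dm * bMat}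

/-- A real algebraic subgroup of `SL(2,ℝ)`. -/
def IsRealAlgSubgroupSL2 (K : Set (Mat 2 ℝ)) : Prop :=
  K ⊆ SL2set ∧
    (∃ S : Set (MvPolynomial (Fin 2 × Fin 2) ℝ),
      K = {A | A ∈ SL2set ∧ ∀ p ∈ S, MvPolynomial.eval (matEval A) p = 0}) ∧
    (1 : Mat 2 ℝ) ∈ K ∧ (∀ a ∈ K, ∀ b ∈ K, a * b ∈ K) ∧ ∀ a ∈ K, a⁻¹ ∈ K

/-
The point: `b` is moved infinitesimally by conjugation with `α`, because
`α b α⁻¹ = [[1, ε²], [0, 1]]`. Hence `α = (α b α⁻¹)⁻¹ (α b)` lies in `μ D^♯ b = μ b H^♯` as well as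
in `D^♯`. A least near coset would be a nonempty subset of both `D` and `bH = Db`, but these are
distinct right cosets of `D`.
-/

section NonstandardExtension

variable {n : ℕ}

theorem ofSeq_sum {ι : Type*} (s : Finset ι) (f : ι → ℕ → ℝ) :
    Hyperreal.ofSeq (fun k => ∑ i ∈ s, f i k) = ∑ i ∈ s, Hyperreal.ofSeq (f i) := by
  rw [← Finset.sum_fn]
  exact map_sum (Germ.coeRingHom (hyperfilter ℕ : Filter ℕ)) f s

theorem matOfSeq_mul (u v : ℕ → Mat n ℝ) :
    matOfSeq n (fun k => u k * v k) = matOfSeq n u * matOfSeq n v := by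
  ext i j
  exact ofSeq_sum Finset.univ fun l k => u k i l * v k l j

theorem matCast_one : matCast (1 : Mat n ℝ) = 1 := by
  ext i j
  rcases eq_or_ne i j with rfl | hij
  · simp [matCast]
  · simp [matCast, hij]

theorem matCast_mul (A B : Mat n ℝ) : matCast (A * B) = matCast A * matCast B :=
  matOfSeq_mul (fun _ => A) fun _ => B

theorem matCast_mem_matSharp {S : Set (Mat n ℝ)} {A : Mat n ℝ} (hA : A ∈ S) :
    matCast A ∈ matSharp n S :=
  ⟨fun _ => A, .of_forall fun _ => hA, rfl⟩

theorem mul_mem_matSharp_mul {S T : Set (Mat n ℝ)} {A B : Mat n Hyperreal}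
    (hA : A ∈ matSharp n S) (hB : B ∈ matSharp n T) : A * B ∈ matSharp n (S * T) := by
  obtain ⟨u, hu, rfl⟩ := hA
  obtain ⟨v, hv, rfl⟩ := hB
  refine ⟨fun k => u k * v k, ?_, (matOfSeq_mul u v).symm⟩
  filter_upwards [hu, hv] with k huk hvk using Set.mul_mem_mul huk hvk

theorem one_mem_muSet {G : Set (Mat n ℝ)} (hG : 1 ∈ G) : 1 ∈ muSet n G := by
  refine ⟨matCast_one (n := n) ▸ matCast_mem_matSharp hG, fun i j => ?_⟩
  rw [sub_self]
  exact Hyperreal.infinitesimal_zero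

theorem nearCoset_one_iff {G S : Set (Mat n ℝ)} {α : Mat n Hyperreal} :
    NearCoset n G 1 S α ↔ α ∈ muSet n G * matSharp n S := by
  rw [NearCoset, matCast_one, Set.singleton_one, one_mul]

theorem mul_matCast_mem_mul_matSharp_conj {S : Set (Mat n ℝ)} {b : Mat n ℝ} (hb : IsUnit b.det)
    {α : Mat n Hyperreal} (hα : α ∈ matSharp n S) :
    α * matCast b ∈ {matCast b} * matSharp n ({b⁻¹} * S * {b}) := by
  refine ⟨matCast b, rfl, matCast b⁻¹ * α * matCast b, ?_, ?_⟩
  · exact mul_mem_matSharp_mul (mul_mem_matSharp_mul (matCast_mem_matSharp rfl) hα)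
      (matCast_mem_matSharp rfl)
  · calc matCast b * (matCast b⁻¹ * α * matCast b)
        = matCast (b * b⁻¹) * α * matCast b := by simp only [matCast_mul, mul_assoc]
      _ = α * matCast b := by rw [Matrix.mul_nonsing_inv b hb, matCast_one, one_mul]

end NonstandardExtension

section AlgebraicSubgroups

theorem exists_eval_matEval_eq_eval_mul_mul {n : ℕ} (g h : Mat n ℝ)
    (p : MvPolynomial (Fin n × Fin n) ℝ) :
    ∃ q : MvPolynomial (Fin n × Fin n) ℝ, ∀ A : Mat n ℝ,
      MvPolynomial.eval (matEval A) q = MvPolynomial.eval (matEval (g * A * h)) p := by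
  let X : Matrix (Fin n) (Fin n) (MvPolynomial (Fin n × Fin n) ℝ) :=
    Matrix.of fun i j => MvPolynomial.X (i, j)
  let Y := g.map MvPolynomial.C * X * h.map MvPolynomial.C
  refine ⟨MvPolynomial.bind₁ (fun ij => Y ij.1 ij.2) p, fun A => ?_⟩
  have eval_Y : (fun ij : Fin n × Fin n => MvPolynomial.eval (matEval A) (Y ij.1 ij.2)) =
      matEval (g * A * h) := by
    ext ij
    simp [Y, X, matEval, Matrix.mul_apply]
  rw [← eval_Y]
  exact MvPolynomial.eval₂Hom_bind₁ _ _ _ _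

theorem mem_conj_iff {n : ℕ} {g : Mat n ℝ} (hg : IsUnit g.det) {S : Set (Mat n ℝ)} {A : Mat n ℝ} :
    A ∈ {g⁻¹} * S * {g} ↔ g * A * g⁻¹ ∈ S := by
  simp only [Set.singleton_mul, Set.mul_singleton, Set.mem_image, exists_exists_and_eq_and]
  constructor
  · rintro ⟨B, hB, rfl⟩
    rwa [← mul_assoc, Matrix.mul_nonsing_inv_cancel_left _ _ hg,
      Matrix.mul_nonsing_inv_cancel_right _ _ hg]
  · intro hA
    refine ⟨_, hA, ?_⟩
    rw [← mul_assoc, Matrix.nonsing_inv_mul_cancel_right _ _ hg,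
      Matrix.nonsing_inv_mul_cancel_left _ _ hg]

theorem isUnit_det_of_mem_SL2set {g : Mat 2 ℝ} (hg : g ∈ SL2set) : IsUnit g.det := by
  rw [show g.det = 1 from hg]
  exact isUnit_one

theorem IsRealAlgSubgroupSL2.conj {K : Set (Mat 2 ℝ)} (hK : IsRealAlgSubgroupSL2 K)
    {g : Mat 2 ℝ} (hg : g ∈ SL2set) : IsRealAlgSubgroupSL2 ({g⁻¹} * K * {g}) := by
  obtain ⟨hsub, ⟨P, hP⟩, hone, hmul, hinv⟩ := hK
  have hdet := isUnit_det_of_mem_SL2set hg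
  have conj_mem_SL2set (A : Mat 2 ℝ) : g * A * g⁻¹ ∈ SL2set ↔ A ∈ SL2set := by
    change (g * A * g⁻¹).det = 1 ↔ A.det = 1
    rw [Matrix.det_conj ((Matrix.isUnit_iff_isUnit_det g).2 hdet)]
  choose q hq using exists_eval_matEval_eq_eval_mul_mul g g⁻¹
  refine ⟨fun A hA => ?_, ⟨q '' P, ?_⟩, ?_, fun A hA B hB => ?_, fun A hA => ?_⟩
  · exact (conj_mem_SL2set A).1 (hsub ((mem_conj_iff hdet).1 hA))
  · ext A
    rw [mem_conj_iff hdet, hP]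
    change _ ∧ _ ↔ _ ∧ _
    simp only [conj_mem_SL2set, Set.forall_mem_image, hq]
  · rw [mem_conj_iff hdet, mul_one, Matrix.mul_nonsing_inv g hdet]
    exact hone
  · rw [mem_conj_iff hdet] at hA hB ⊢
    convert hmul _ hA _ hB using 1
    simp only [mul_assoc, Matrix.nonsing_inv_mul_cancel_left _ _ hdet]
  · rw [mem_conj_iff hdet] at hA ⊢
    convert hinv _ hA using 1
    simp only [Matrix.mul_inv_rev, Matrix.nonsing_inv_nonsing_inv g hdet, mul_assoc]

theorem not_exists_least_nearCoset {α : Mat 2 Hyperreal} {g₁ g₂ : Mat 2 ℝ} {K₁ K₂ : Set (Mat 2 ℝ)}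
    (hg₁ : g₁ ∈ SL2set) (hK₁ : IsRealAlgSubgroupSL2 K₁) (h₁ : NearCoset 2 SL2set g₁ K₁ α)
    (hg₂ : g₂ ∈ SL2set) (hK₂ : IsRealAlgSubgroupSL2 K₂) (h₂ : NearCoset 2 SL2set g₂ K₂ α)
    (hdisj : Disjoint ({g₁} * K₁) ({g₂} * K₂)) :
    ¬ ∃ g ∈ SL2set, ∃ K : Set (Mat 2 ℝ), IsRealAlgSubgroupSL2 K ∧ NearCoset 2 SL2set g K α ∧
      ∀ g' ∈ SL2set, ∀ K' : Set (Mat 2 ℝ), IsRealAlgSubgroupSL2 K' →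
        NearCoset 2 SL2set g' K' α → {g} * K ⊆ {g'} * K' := by
  rintro ⟨g, -, K, ⟨-, -, one_mem, -⟩, -, hleast⟩
  have hg : g ∈ {g} * K := ⟨g, rfl, 1, one_mem, mul_one g⟩
  exact Set.disjoint_left.1 hdisj (hleast g₁ hg₁ K₁ hK₁ h₁ hg) (hleast g₂ hg₂ K₂ hK₂ h₂ hg)

end AlgebraicSubgroups

section DiagonalSubgroup

theorem one_mem_SL2set : 1 ∈ SL2set :=
  Matrix.det_one

theorem bMat_mem_SL2set : bMat ∈ SL2set := by
  simp [SL2set, bMat]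

theorem mem_Dset_iff {A : Mat 2 ℝ} : A ∈ Dset ↔ A ∈ SL2set ∧ A 0 1 = 0 ∧ A 1 0 = 0 := by
  constructor
  · rintro ⟨a, ha, rfl⟩
    simp [SL2set, ha]
  · rintro ⟨hdet, h₀₁, h₁₀⟩
    have hprod : A 0 0 * A 1 1 = 1 := by
      simpa [h₀₁, h₁₀] using (Matrix.det_fin_two A).symm.trans hdet
    refine ⟨A 0 0, left_ne_zero_of_mul_eq_one hprod, ?_⟩
    rw [← eq_inv_of_mul_eq_one_right hprod]
    simpa only [h₀₁, h₁₀] using Matrix.eta_fin_two A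

theorem isRealAlgSubgroupSL2_Dset : IsRealAlgSubgroupSL2 Dset := by
  refine ⟨fun A hA => (mem_Dset_iff.1 hA).1,
    ⟨{MvPolynomial.X (0, 1), MvPolynomial.X (1, 0)}, ?_⟩, ?_, ?_, ?_⟩
  · ext A
    rw [mem_Dset_iff]
    change _ ↔ _ ∧ _
    simp [matEval]
  · simp [mem_Dset_iff, one_mem_SL2set]
  · rintro _ ⟨a, ha, rfl⟩ _ ⟨c, hc, rfl⟩
    exact ⟨a * c, mul_ne_zero ha hc, by simp [mul_comm]⟩
  · rintro _ ⟨a, ha, rfl⟩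
    exact ⟨a⁻¹, inv_ne_zero ha, by simp [Matrix.inv_def, ha]⟩

theorem Hconj_eq_conj : Hconj = {bMat⁻¹} * Dset * {bMat} := by
  ext A
  simp [Hconj, eq_comm]

theorem isRealAlgSubgroupSL2_Hconj : IsRealAlgSubgroupSL2 Hconj :=
  Hconj_eq_conj ▸ isRealAlgSubgroupSL2_Dset.conj bMat_mem_SL2set

theorem singleton_bMat_mul_Hconj : {bMat} * Hconj = Dset * {bMat} := by
  have hb : bMat * bMat⁻¹ = 1 :=
    Matrix.mul_nonsing_inv bMat (isUnit_det_of_mem_SL2set bMat_mem_SL2set)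
  rw [Hconj_eq_conj, ← mul_assoc, ← mul_assoc, Set.singleton_mul_singleton, hb, Set.singleton_one,
    one_mul]

theorem disjoint_Dset_singleton_bMat_mul_Hconj : Disjoint Dset ({bMat} * Hconj) := by
  rw [singleton_bMat_mul_Hconj, Set.disjoint_left]
  rintro _ hA ⟨_, ⟨a, ha, rfl⟩, _, rfl, rfl⟩
  have h₀₁ : (!![a, 0; 0, a⁻¹] * bMat) 0 1 = 0 := (mem_Dset_iff.1 hA).2.1
  have ha₀ : a = 0 := by simpa [bMat] using h₀₁
  exact ha ha₀

end DiagonalSubgroup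

section NearCosets

theorem infinitesimal_of_pos_of_forall_lt {ε : Hyperreal} (hpos : 0 < ε)
    (hlt : ∀ r : ℝ, 0 < r → ε < (r : Hyperreal)) : Hyperreal.Infinitesimal ε :=
  Hyperreal.infinitesimal_def.2 fun r hr =>
    ⟨(neg_neg_of_pos (Hyperreal.coe_pos.2 hr)).trans hpos, hlt r hr⟩

theorem matOfSeq_fin_two (a b c d : ℕ → ℝ) :
    matOfSeq 2 (fun k => !![a k, b k; c k, d k]) =
      !![Hyperreal.ofSeq a, Hyperreal.ofSeq b; Hyperreal.ofSeq c, Hyperreal.ofSeq d] := by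
  ext i j
  fin_cases i <;> fin_cases j <;> rfl

theorem diag_mem_matSharp_Dset {ε : Hyperreal} (hε : ε ≠ 0) :
    !![ε, 0; 0, ε⁻¹] ∈ matSharp 2 Dset := by
  obtain ⟨f, rfl⟩ := Hyperreal.ofSeq_surjective ε
  have hf : ∀ᶠ k in hyperfilter ℕ, f k ≠ 0 :=
    Ultrafilter.eventually_not.2 fun h => hε (Germ.coe_eq.2 h)
  exact ⟨fun k => !![f k, 0; 0, (f k)⁻¹], hf.mono fun k hk => ⟨f k, hk, rfl⟩,
    (matOfSeq_fin_two f 0 0 f⁻¹).symm⟩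

theorem transvection_mem_muSet {x : Hyperreal} (hx : Hyperreal.Infinitesimal x) :
    !![1, x; 0, 1] ∈ muSet 2 SL2set := by
  constructor
  · obtain ⟨f, rfl⟩ := Hyperreal.ofSeq_surjective x
    exact ⟨fun k => !![1, f k; 0, 1], .of_forall fun k => by simp [SL2set],
      (matOfSeq_fin_two 1 f 0 1).symm⟩
  · intro i j
    fin_cases i <;> fin_cases j <;> simp [hx, Hyperreal.infinitesimal_zero]

theorem nearCoset_one_Dset {ε : Hyperreal} (hε : ε ≠ 0) :
    NearCoset 2 SL2set 1 Dset !![ε, 0; 0, ε⁻¹] :=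
  nearCoset_one_iff.2
    ⟨1, one_mem_muSet one_mem_SL2set, _, diag_mem_matSharp_Dset hε, one_mul _⟩

theorem nearCoset_bMat_Hconj {ε : Hyperreal} (hε : ε ≠ 0) (hinf : Hyperreal.Infinitesimal ε) :
    NearCoset 2 SL2set bMat Hconj !![ε, 0; 0, ε⁻¹] := by
  have hcoset : !![ε, 0; 0, ε⁻¹] * matCast bMat ∈ {matCast bMat} * matSharp 2 Hconj :=
    Hconj_eq_conj ▸ mul_matCast_mem_mul_matSharp_conj
      (isUnit_det_of_mem_SL2set bMat_mem_SL2set) (diag_mem_matSharp_Dset hε)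
  refine ⟨!![1, -(ε * ε); 0, 1], transvection_mem_muSet (hinf.mul hinf).neg, _, hcoset, ?_⟩
  have hb : matCast bMat = !![1, 1; 0, 1] := matOfSeq_fin_two 1 1 0 1
  simp [hb, hε]

end NearCosets

/-- in `SL(2,ℝ)` there need not be a smallest coset near a point:
for `α = diag(ε, ε⁻¹)` with `ε` a positive infinitesimal, both `D` and `bH = Db` are
near `α`, yet `D ∩ bH = ∅`; hence no smallest near coset exists. -/
theorem stmt7 (ε : Hyperreal) (hpos : 0 < ε) (hinf : ∀ r : ℝ, 0 < r → ε < (r : Hyperreal)) :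
    (!![ε, 0; 0, ε⁻¹] : Mat 2 Hyperreal) ∈ muSet 2 SL2set * matSharp 2 Dset ∧
    (!![ε, 0; 0, ε⁻¹] : Mat 2 Hyperreal) ∈
      muSet 2 SL2set * ({matCast bMat} * matSharp 2 Hconj) ∧
    Dset ∩ ({bMat} * Hconj) = ∅ ∧
    ¬ ∃ g ∈ SL2set, ∃ K : Set (Mat 2 ℝ), IsRealAlgSubgroupSL2 K ∧
      (!![ε, 0; 0, ε⁻¹] : Mat 2 Hyperreal) ∈ muSet 2 SL2set * ({matCast g} * matSharp 2 K) ∧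
      ∀ g' ∈ SL2set, ∀ K' : Set (Mat 2 ℝ), IsRealAlgSubgroupSL2 K' →
        (!![ε, 0; 0, ε⁻¹] : Mat 2 Hyperreal) ∈
          muSet 2 SL2set * ({matCast g'} * matSharp 2 K') →
        {g} * K ⊆ {g'} * K' := by
  have hε : ε ≠ 0 := hpos.ne'
  have hD := nearCoset_one_Dset hε
  have hH := nearCoset_bMat_Hconj hε (infinitesimal_of_pos_of_forall_lt hpos hinf)
  have hdisj := disjoint_Dset_singleton_bMat_mul_Hconj
  refine ⟨nearCoset_one_iff.1 hD, hH, hdisj.inter_eq, ?_⟩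
  have hdisj' : Disjoint ({1} * Dset) ({bMat} * Hconj) := by
    rwa [Set.singleton_one, one_mul]
  exact not_exists_least_nearCoset one_mem_SL2set isRealAlgSubgroupSL2_Dset hD
    bMat_mem_SL2set isRealAlgSubgroupSL2_Hconj hH hdisj'
end
end

section
/- Let G ⊆ UT(n,ℝ) be a real unipotent group, Γ a lattice in G, and H a real algebraic subgroup of G that is normal in G. Suppose H₀ is a real algebraic subgroup of G such that H ⊆ H₀, H₀ is Γ-rational, and H₀ ⊆ L for every Γ-rational real algebraic subgroup L of G with H ⊆ L (i.e. H₀ is the smallest Γ-rational real algebraic subgroup of G containing H). Then H₀ is normal in G. -/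
open Pointwise Filter

noncomputable section

/-!
A function on a monoid is polynomial if it is killed by sufficiently many right differences
`F ↦ F (· * a) - F`. On a unipotent group the matrix entries are polynomial in this sense, hence so
is every polynomial in the entries. A bounded polynomial function is constant, because its
differences are constant by induction, so that it grows linearly along powers. If `F` vanishes on a
cocompact subgroup `Γ`, then so does `F (· * γ) - F` for `γ ∈ Γ`; by induction `F` is
right-`Γ`-invariant, hence bounded, hence zero. Thus `Γ` is Zariski dense (Borel density).

Conjugation by `γ ∈ Γ` permutes the `Γ`-rational subgroups and preserves `H`, so the minimality of
`H₀` shows that `Γ` normalizes `H₀`. For fixed `x ∈ H₀` the condition `g * x * g⁻¹ ∈ H₀` is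
polynomial in the entries of `g`, since `g⁻¹ = g.adjugate`, so it extends from `Γ` to `G`.
-/

section DifferenceDegree

variable {R M E A : Type*}

section Module

variable (R) [CommRing R] [AddCommGroup E] [Module R E] [Mul M]

/-- The right difference operator by `a`, sending `F` to `g ↦ F (g * a) - F g`. -/
def rightDiff (a : M) : (M → E) →ₗ[R] (M → E) :=
  LinearMap.funLeft R E (· * a) - LinearMap.id

@[simp]
lemma rightDiff_apply (a : M) (F : M → E) (g : M) : rightDiff R a F g = F (g * a) - F g := rfl

/-- The functions killed by any `m` successive right differences: the polynomial functions of
degree less than `m` on a monoid. -/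
def differenceDegreeLT : ℕ → Submodule R (M → E)
  | 0 => ⊥
  | m + 1 => ⨅ a, (differenceDegreeLT m).comap (rightDiff R a)

variable {R}

@[simp]
lemma mem_differenceDegreeLT_zero {F : M → E} : F ∈ differenceDegreeLT R 0 ↔ F = 0 := Iff.rfl

lemma mem_differenceDegreeLT_succ {m : ℕ} {F : M → E} :
    F ∈ differenceDegreeLT R (m + 1) ↔ ∀ a, rightDiff R a F ∈ differenceDegreeLT R m := by
  simp [differenceDegreeLT]

lemma differenceDegreeLT_mono : Monotone (differenceDegreeLT R : ℕ → Submodule R (M → E)) := by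
  refine monotone_nat_of_le_succ fun m => ?_
  induction m with
  | zero => exact bot_le
  | succ m ih =>
    exact fun F hF => mem_differenceDegreeLT_succ.2 fun a => ih (mem_differenceDegreeLT_succ.1 hF a)

lemma const_mem_differenceDegreeLT_one (c : E) :
    Function.const M c ∈ differenceDegreeLT R 1 :=
  mem_differenceDegreeLT_succ.2 fun a => by
    ext g
    simp

end Module

section Algebra

variable [CommRing R] [Ring A] [Algebra R A] [Mul M]

lemma rightDiff_mul (a : M) (F F' : M → A) :
    rightDiff R a (F * F') =
      rightDiff R a F * F' + F * rightDiff R a F' + rightDiff R a F * rightDiff R a F' := by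
  ext g
  simp only [rightDiff_apply, Pi.add_apply, Pi.mul_apply]
  noncomm_ring

lemma mul_mem_differenceDegreeLT {m k : ℕ} {F F' : M → A} (hF : F ∈ differenceDegreeLT R m)
    (hF' : F' ∈ differenceDegreeLT R k) : F * F' ∈ differenceDegreeLT R (m + k) := by
  induction m generalizing F F' k with
  | zero => simp [mem_differenceDegreeLT_zero.1 hF]
  | succ m ihm =>
    induction k generalizing F F' with
    | zero => simp [mem_differenceDegreeLT_zero.1 hF']
    | succ k ihk =>
      refine mem_differenceDegreeLT_succ.2 fun a => ?_
      have hΔF := mem_differenceDegreeLT_succ.1 hF a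
      have hΔF' := mem_differenceDegreeLT_succ.1 hF' a
      rw [rightDiff_mul]
      refine add_mem (add_mem ?_ (ihk hF hΔF')) (differenceDegreeLT_mono (by lia) (ihm hΔF hΔF'))
      exact differenceDegreeLT_mono (by lia) (ihm hΔF hF')

end Algebra

lemma exists_mem_differenceDegreeLT_eval [CommRing R] [Mul M] {σ : Type*} {f : σ → M → R}
    (hf : ∀ i, ∃ m, f i ∈ differenceDegreeLT R m) (p : MvPolynomial σ R) :
    ∃ m, (fun g => MvPolynomial.eval (f · g) p) ∈ differenceDegreeLT R m := by
  induction p using MvPolynomial.induction_on with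
  | C c =>
    simp only [MvPolynomial.eval_C]
    exact ⟨1, const_mem_differenceDegreeLT_one c⟩
  | add p q hp hq =>
    obtain ⟨m, hm⟩ := hp
    obtain ⟨k, hk⟩ := hq
    simp only [map_add]
    exact ⟨max m k, add_mem (differenceDegreeLT_mono (le_max_left m k) hm)
      (differenceDegreeLT_mono (le_max_right m k) hk)⟩
  | mul_X p i hp =>
    obtain ⟨m, hm⟩ := hp
    obtain ⟨k, hk⟩ := hf i
    simp only [map_mul, MvPolynomial.eval_X]
    exact ⟨m + k, mul_mem_differenceDegreeLT hm hk⟩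

end DifferenceDegree

section Density

lemma apply_pow_of_forall_sub_eq {M E : Type*} [Monoid M] [AddCommGroup E] {F : M → E} {a : M}
    {v : E} (h : ∀ g, F (g * a) - F g = v) (k : ℕ) : F (a ^ k) = F 1 + k • v := by
  induction k with
  | zero => simp
  | succ k ih => rw [pow_succ, sub_eq_iff_eq_add.1 (h _), ih, succ_nsmul']; abel

variable {M E : Type*} [Monoid M] [NormedAddCommGroup E] [NormedSpace ℝ E]

lemma eq_zero_of_norm_nsmul_le {v : E} {C : ℝ} (h : ∀ k : ℕ, ‖k • v‖ ≤ C) : v = 0 := by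
  by_contra hv
  obtain ⟨k, hk⟩ := exists_lt_nsmul (norm_pos_iff.2 hv) C
  exact (h k).not_gt (by
    rwa [← Nat.cast_smul_eq_nsmul ℝ, norm_smul, Real.norm_natCast, ← nsmul_eq_mul])

lemma apply_eq_apply_one_of_bounded {m : ℕ} {F : M → E} (hF : F ∈ differenceDegreeLT ℝ m)
    {C : ℝ} (hC : ∀ g, ‖F g‖ ≤ C) (g : M) : F g = F 1 := by
  induction m generalizing F C g with
  | zero => simp [mem_differenceDegreeLT_zero.1 hF]
  | succ m ih =>
    have hΔ (h : M) : F (h * g) - F h = F g - F 1 := by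
      have hbound (h : M) : ‖rightDiff ℝ g F h‖ ≤ C + C := norm_sub_le_of_le (hC _) (hC _)
      simpa using ih (mem_differenceDegreeLT_succ.1 hF g) hbound h
    refine sub_eq_zero.1 (eq_zero_of_norm_nsmul_le (C := C + C) fun k => ?_)
    rw [← add_sub_cancel_left (F 1) (k • _), ← apply_pow_of_forall_sub_eq hΔ]
    exact norm_sub_le_of_le (hC _) (hC _)

theorem eq_zero_of_cocompact [TopologicalSpace M] [ContinuousMul M] {Γ : Submonoid M} {K : Set M}
    (hK : IsCompact K) (hKΓ : K * (Γ : Set M) = Set.univ) {m : ℕ} {F : M → E}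
    (hF : F ∈ differenceDegreeLT ℝ m) (hcont : Continuous F) (hΓ : ∀ γ ∈ Γ, F γ = 0) : F = 0 := by
  induction m generalizing F with
  | zero => exact mem_differenceDegreeLT_zero.1 hF
  | succ m ih =>
    have hinv (γ : M) (hγ : γ ∈ Γ) : rightDiff ℝ γ F = 0 :=
      ih (mem_differenceDegreeLT_succ.1 hF γ) ((hcont.comp (continuous_mul_const γ)).sub hcont)
        fun δ hδ => by simp [hΓ _ (mul_mem hδ hγ), hΓ δ hδ]
    obtain ⟨C, hC⟩ := hK.exists_bound_of_continuousOn hcont.continuousOn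
    have hbound (g : M) : ‖F g‖ ≤ C := by
      obtain ⟨k, hk, γ, hγ, rfl⟩ := hKΓ.symm ▸ Set.mem_univ g
      have hkγ : F (k * γ) = F k := sub_eq_zero.1 (congrFun (hinv γ hγ) k)
      exact hkγ ▸ hC k hk
    ext g
    rw [apply_eq_apply_one_of_bounded hF hbound g, hΓ 1 (one_mem Γ), Pi.zero_apply]

end Density

section Unitriangular

lemma mul_apply_self_of_isUpperTriangular {ι R : Type*} [LinearOrder ι] [Fintype ι]
    [NonUnitalNonAssocSemiring R] {A B : Matrix ι ι R} (hA : A.IsUpperTriangular)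
    (hB : B.IsUpperTriangular) (i : ι) : (A * B) i i = A i i * B i i := by
  rw [Matrix.mul_apply, Finset.sum_eq_single i _ (by simp)]
  intro k _ hk
  rcases hk.lt_or_gt with hki | hik
  · rw [hA hki, zero_mul]
  · rw [hB hik, mul_zero]

lemma entry_mem_differenceDegreeLT {n : ℕ} {R : Type*} [CommRing R]
    {S : Submonoid (Matrix (Fin n) (Fin n) R)} (hdiag : ∀ A ∈ S, ∀ i, A i i = 1)
    (hupper : ∀ A ∈ S, A.IsUpperTriangular) (i j : Fin n) :
    (fun g : S => (g : Matrix (Fin n) (Fin n) R) i j) ∈ differenceDegreeLT R (j + 1) := by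
  induction j using WellFoundedLT.induction with
  | ind j ih =>
    refine mem_differenceDegreeLT_succ.2 fun a => ?_
    have hΔ : rightDiff R a (fun g : S => (g : Matrix (Fin n) (Fin n) R) i j) =
        ∑ k, (a.1 - 1) k j • fun g : S => (g : Matrix (Fin n) (Fin n) R) i k := by
      ext g
      calc (g.1 * a.1) i j - g.1 i j = (g.1 * (a.1 - 1)) i j := by
            rw [mul_sub, mul_one, Matrix.sub_apply]
        _ = _ := by
            simp only [Matrix.mul_apply, Finset.sum_apply, Pi.smul_apply, smul_eq_mul, mul_comm]
    rw [hΔ]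
    refine Submodule.sum_mem _ fun k _ => ?_
    rcases lt_trichotomy k j with hkj | rfl | hjk
    · exact Submodule.smul_mem _ _ (differenceDegreeLT_mono hkj (ih k hkj))
    · simp [hdiag a.1 a.2]
    · simp [hupper a.1 a.2 hjk, Matrix.one_apply_ne hjk.ne']

variable {n : ℕ} {A B : Mat n ℝ}

lemma isUpperTriangular_of_mem_UTset (hA : A ∈ UTset n) : A.IsUpperTriangular :=
  fun i j hij => hA.2 i j hij

lemma mul_mem_UTset (hA : A ∈ UTset n) (hB : B ∈ UTset n) : A * B ∈ UTset n := by
  have hA' := isUpperTriangular_of_mem_UTset hA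
  have hB' := isUpperTriangular_of_mem_UTset hB
  refine ⟨fun i => ?_, fun i j hij => hA'.mul hB' hij⟩
  rw [mul_apply_self_of_isUpperTriangular hA' hB', hA.1, hB.1, one_mul]

lemma det_eq_one_of_mem_UTset (hA : A ∈ UTset n) : A.det = 1 := by
  rw [Matrix.det_of_isUpperTriangular (isUpperTriangular_of_mem_UTset hA)]
  exact Finset.prod_eq_one fun i _ => hA.1 i

lemma isUnit_of_mem_UTset (hA : A ∈ UTset n) : IsUnit A :=
  (Matrix.isUnit_iff_isUnit_det A).2 (by simp [det_eq_one_of_mem_UTset hA])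

lemma inv_eq_adjugate_of_mem_UTset (hA : A ∈ UTset n) : A⁻¹ = A.adjugate := by
  simp [Matrix.inv_def, det_eq_one_of_mem_UTset hA]

lemma inv_mem_UTset (hA : A ∈ UTset n) : A⁻¹ ∈ UTset n := by
  have hA' := isUpperTriangular_of_mem_UTset hA
  have := (isUnit_of_mem_UTset hA).invertible
  have hinv : A⁻¹.IsUpperTriangular := Matrix.blockTriangular_inv_of_blockTriangular hA'
  refine ⟨fun i => ?_, fun i j hij => hinv hij⟩
  calc A⁻¹ i i = A i i * A⁻¹ i i := by rw [hA.1, one_mul]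
    _ = (A * A⁻¹) i i := (mul_apply_self_of_isUpperTriangular hA' hinv i).symm
    _ = 1 := by rw [Matrix.mul_inv_of_invertible, Matrix.one_apply_eq]

lemma conj_mem_UTset {g A : Mat n ℝ} (hg : g ∈ UTset n) (hA : A ∈ UTset n) :
    g * A * g⁻¹ ∈ UTset n :=
  mul_mem_UTset (mul_mem_UTset hg hA) (inv_mem_UTset hg)

theorem eval_matEval_eq_zero_of_cocompact {G Γ : Submonoid (Mat n ℝ)}
    (hGU : (G : Set (Mat n ℝ)) ⊆ UTset n) (hΓG : Γ ≤ G)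
    (hcocompact : ∃ K ⊆ (G : Set (Mat n ℝ)), IsCompact K ∧ (G : Set (Mat n ℝ)) ⊆ K * Γ)
    {q : MvPolynomial (Fin n × Fin n) ℝ}
    (hq : ∀ γ ∈ Γ, MvPolynomial.eval (matEval γ) q = 0) {g : Mat n ℝ} (hg : g ∈ G) :
    MvPolynomial.eval (matEval g) q = 0 := by
  obtain ⟨K, hKG, hK, hGK⟩ := hcocompact
  obtain ⟨m, hm⟩ := exists_mem_differenceDegreeLT_eval (f := fun ij (g : G) => g.1 ij.1 ij.2)
    (fun ij => ⟨_, entry_mem_differenceDegreeLT (fun A hA => (hGU hA).1)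
      (fun A hA => isUpperTriangular_of_mem_UTset (hGU hA)) ij.1 ij.2⟩) q
  have hcont : Continuous fun g : G => MvPolynomial.eval (fun ij => g.1 ij.1 ij.2) q :=
    q.continuous_eval.comp <| continuous_pi fun ij =>
      continuous_subtype_val.matrix_elem ij.1 ij.2
  have hK' : IsCompact ((↑) ⁻¹' K : Set G) :=
    Topology.IsInducing.subtypeVal.isCompact_preimage' hK (by simpa using hKG)
  have hGK' : ((↑) ⁻¹' K : Set G) * (Γ.comap G.subtype : Set G) = Set.univ := by
    refine Set.eq_univ_of_forall fun g => ?_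
    obtain ⟨k, hk, γ, hγ, hkγ⟩ := hGK g.2
    exact ⟨⟨k, hKG hk⟩, hk, ⟨γ, hΓG hγ⟩, hγ, Subtype.ext hkγ⟩
  exact congrFun (eq_zero_of_cocompact hK' hGK' hm hcont fun γ hγ => hq γ hγ) ⟨g, hg⟩

end Unitriangular

section Substitution

lemma mapMatrix_eval_mapMatrix_C {σ ι R : Type*} [Fintype ι] [DecidableEq ι] [CommSemiring R]
    (v : σ → R) (A : Matrix ι ι R) :
    (MvPolynomial.eval v).mapMatrix (MvPolynomial.C.mapMatrix A) = A := by
  ext i j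
  simp

variable {n : ℕ}

lemma exists_eval_matEval_eq (Q : Mat n (MvPolynomial (Fin n × Fin n) ℝ))
    (p : MvPolynomial (Fin n × Fin n) ℝ) :
    ∃ q, ∀ A : Mat n ℝ, MvPolynomial.eval (matEval A) q =
      MvPolynomial.eval (matEval ((MvPolynomial.eval (matEval A)).mapMatrix Q)) p := by
  refine ⟨MvPolynomial.bind₁ (fun ij => Q ij.1 ij.2) p, fun A => ?_⟩
  rw [MvPolynomial.eval, MvPolynomial.eval₂Hom_bind₁]
  rfl

lemma mapMatrix_eval_matEval_mvPolynomialX (A : Mat n ℝ) :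
    (MvPolynomial.eval (matEval A)).mapMatrix (Matrix.mvPolynomialX (Fin n) (Fin n) ℝ) = A :=
  Matrix.mvPolynomialX_mapMatrix_eval A

lemma exists_eval_matEval_eq_mul_mul (B C : Mat n ℝ) (p : MvPolynomial (Fin n × Fin n) ℝ) :
    ∃ q, ∀ A : Mat n ℝ, MvPolynomial.eval (matEval A) q =
      MvPolynomial.eval (matEval (B * A * C)) p := by
  obtain ⟨q, hq⟩ := exists_eval_matEval_eq
    (MvPolynomial.C.mapMatrix B * Matrix.mvPolynomialX _ _ ℝ * MvPolynomial.C.mapMatrix C) p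
  refine ⟨q, fun A => ?_⟩
  rw [hq, map_mul, map_mul, mapMatrix_eval_mapMatrix_C, mapMatrix_eval_mapMatrix_C,
    mapMatrix_eval_matEval_mvPolynomialX]

lemma exists_eval_matEval_eq_conj (x : Mat n ℝ) (p : MvPolynomial (Fin n × Fin n) ℝ) :
    ∃ q, ∀ g ∈ UTset n, MvPolynomial.eval (matEval g) q =
      MvPolynomial.eval (matEval (g * x * g⁻¹)) p := by
  obtain ⟨q, hq⟩ := exists_eval_matEval_eq (Matrix.mvPolynomialX _ _ ℝ *
    MvPolynomial.C.mapMatrix x * (Matrix.mvPolynomialX _ _ ℝ).adjugate) p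
  refine ⟨q, fun g hg => ?_⟩
  rw [hq, map_mul, map_mul, mapMatrix_eval_mapMatrix_C, RingHom.map_adjugate,
    mapMatrix_eval_matEval_mvPolynomialX, inv_eq_adjugate_of_mem_UTset hg]

end Substitution

section Conjugation

lemma mem_toConjAct_smul_set_iff {M : Type*} [Monoid M] {u : Mˣ} {x : M} {L : Set M} :
    x ∈ ConjAct.toConjAct u • L ↔ ((u⁻¹ : Mˣ) : M) * x * u ∈ L := by
  rw [Set.mem_smul_set_iff_inv_smul_mem, ← ConjAct.toConjAct_inv, ConjAct.units_smul_def,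
    ConjAct.ofConjAct_toConjAct, inv_inv]

lemma toConjAct_smul_coe_submonoid {M : Type*} [Monoid M] {S : Submonoid M} {u : Mˣ}
    (hu : (u : M) ∈ S) (hu' : ((u⁻¹ : Mˣ) : M) ∈ S) :
    ConjAct.toConjAct u • (S : Set M) = S := by
  refine Set.Subset.antisymm (Set.smul_set_subset_iff.2 fun x hx => ?_) fun x hx => ?_
  · exact mul_mem (mul_mem hu hx) hu'
  · exact mem_toConjAct_smul_set_iff.2 (mul_mem (mul_mem hu' hx) hu)

lemma conjAct_smul_inv {ι R : Type*} [Fintype ι] [DecidableEq ι] [CommRing R]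
    (c : ConjAct (Matrix ι ι R)ˣ) (A : Matrix ι ι R) : (c • A)⁻¹ = c • A⁻¹ := by
  simp only [ConjAct.units_smul_def, Matrix.mul_inv_rev, ← Matrix.coe_units_inv, inv_inv,
    mul_assoc]

variable {n : ℕ} {H Γ : Set (Mat n ℝ)}

lemma IsRealUnipotentGroup.subset_UTset (h : IsRealUnipotentGroup n H) : H ⊆ UTset n := by
  obtain ⟨⟨S, rfl⟩, -⟩ := h
  exact fun A hA => hA.1

/-- The submonoid of the matrix ring underlying a real unipotent group, on which difference
operators act. -/
def IsRealUnipotentGroup.submonoid (h : IsRealUnipotentGroup n H) : Submonoid (Mat n ℝ) where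
  carrier := H
  one_mem' := h.2.1
  mul_mem' ha hb := h.2.2.1 _ ha _ hb

/-- The submonoid of the matrix ring underlying a lattice, to be compared with that of the
ambient group. -/
def IsLatticeIn.submonoid (h : IsLatticeIn n H Γ) : Submonoid (Mat n ℝ) where
  carrier := Γ
  one_mem' := h.2.1
  mul_mem' ha hb := h.2.2.1 _ ha _ hb

lemma IsLatticeIn.exists_isCompact_subset_mul (h : IsLatticeIn n H Γ) :
    ∃ K ⊆ H, IsCompact K ∧ H ⊆ K * Γ := by
  obtain ⟨-, -, -, -, -, K, hKH, hK, hHK⟩ := h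
  refine ⟨K, hKH, hK, fun g hg => ?_⟩
  obtain ⟨k, hk, γ, hγ, rfl⟩ := hHK g hg
  exact Set.mul_mem_mul hk hγ

lemma IsLatticeIn.smul (h : IsLatticeIn n H Γ) (c : ConjAct (Mat n ℝ)ˣ) :
    IsLatticeIn n (c • H) (c • Γ) := by
  obtain ⟨hΓH, hone, hmul, hinv, hdisc, K, hKH, hK, hHK⟩ := h
  refine ⟨Set.smul_set_mono hΓH, ⟨1, hone, smul_one c⟩, ?_, ?_, ?_, c • K,
    Set.smul_set_mono hKH, hK.smul c, ?_⟩
  · rintro _ ⟨a, ha, rfl⟩ _ ⟨b, hb, rfl⟩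
    exact ⟨a * b, hmul a ha b hb, smul_mul' c a b⟩
  · rintro _ ⟨a, ha, rfl⟩
    exact ⟨a⁻¹, hinv a ha, (conjAct_smul_inv c a).symm⟩
  · exact (IsDiscrete.image ⟨hdisc⟩ (Homeomorph.smul c).isInducing).to_subtype
  · rintro _ ⟨g, hg, rfl⟩
    obtain ⟨k, hk, γ, hγ, rfl⟩ := hHK g hg
    exact ⟨c • k, Set.smul_mem_smul_set hk, c • γ, Set.smul_mem_smul_set hγ, smul_mul' c k γ⟩

lemma IsRationalFor.smul (h : IsRationalFor n Γ H) {c : ConjAct (Mat n ℝ)ˣ} (hc : c • Γ = Γ) :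
    IsRationalFor n Γ (c • H) := by
  have := IsLatticeIn.smul h c
  rwa [Set.smul_set_inter, hc] at this

lemma IsRealUnipotentGroup.smul (h : IsRealUnipotentGroup n H) {u : (Mat n ℝ)ˣ}
    (hu : (u : Mat n ℝ) ∈ UTset n) : IsRealUnipotentGroup n (ConjAct.toConjAct u • H) := by
  obtain ⟨⟨S, hS⟩, hone, hmul, hinv⟩ := h
  refine ⟨?_, ⟨1, hone, smul_one _⟩, ?_, ?_⟩
  · choose q hq using exists_eval_matEval_eq_mul_mul ((u⁻¹ : (Mat n ℝ)ˣ) : Mat n ℝ) u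
    have hUT (A : Mat n ℝ) : ((u⁻¹ : (Mat n ℝ)ˣ) : Mat n ℝ) * A * u ∈ UTset n ↔ A ∈ UTset n := by
      refine ⟨fun hA => ?_, fun hA => ?_⟩
      · simpa [mul_assoc, ← Matrix.coe_units_inv] using conj_mem_UTset hu hA
      · simpa [← Matrix.coe_units_inv] using conj_mem_UTset (inv_mem_UTset hu) hA
    refine ⟨q '' S, Set.ext fun A => ?_⟩
    rw [mem_toConjAct_smul_set_iff, hS]
    simp only [Set.mem_ofPred_eq, Set.forall_mem_image, hq, hUT]
  · rintro _ ⟨a, ha, rfl⟩ _ ⟨b, hb, rfl⟩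
    exact ⟨a * b, hmul a ha b hb, smul_mul' _ a b⟩
  · rintro _ ⟨a, ha, rfl⟩
    exact ⟨a⁻¹, hinv a ha, (conjAct_smul_inv _ a).symm⟩

end Conjugation

section Normality

variable {n : ℕ} {G Γ : Submonoid (Mat n ℝ)}

lemma isNormalIn_of_cocompact (hGU : (G : Set (Mat n ℝ)) ⊆ UTset n) (hΓG : Γ ≤ G)
    (hcocompact : ∃ K ⊆ (G : Set (Mat n ℝ)), IsCompact K ∧ (G : Set (Mat n ℝ)) ⊆ K * Γ)
    {N : Set (Mat n ℝ)} (hN : IsRealUnipotentGroup n N) (hΓN : IsNormalIn n Γ N) :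
    IsNormalIn n G N := by
  intro g hg x hx
  have hxU := hN.subset_UTset hx
  obtain ⟨⟨T, rfl⟩, -⟩ := hN
  refine ⟨conj_mem_UTset (hGU hg) hxU, fun p hp => ?_⟩
  obtain ⟨q, hq⟩ := exists_eval_matEval_eq_conj x p
  rw [← hq g (hGU hg)]
  refine eval_matEval_eq_zero_of_cocompact hGU hΓG hcocompact (fun γ hγ => ?_) hg
  rw [hq γ (hGU (hΓG hγ))]
  exact (hΓN γ hγ x hx).2 p hp

theorem stmt9_general (hGU : (G : Set (Mat n ℝ)) ⊆ UTset n) (hΓG : Γ ≤ G)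
    (hΓinv : ∀ γ ∈ Γ, γ⁻¹ ∈ Γ)
    (hcocompact : ∃ K ⊆ (G : Set (Mat n ℝ)), IsCompact K ∧ (G : Set (Mat n ℝ)) ⊆ K * Γ)
    {H H₀ : Set (Mat n ℝ)} (hH : IsNormalIn n Γ H) (hH₀ : IsRealAlgSubgroup n G H₀)
    (hHH₀ : H ⊆ H₀) (hH₀rat : IsRationalFor n Γ H₀)
    (hH₀min : ∀ L : Set (Mat n ℝ), IsRealAlgSubgroup n G L → IsRationalFor n Γ L → H ⊆ L →
      H₀ ⊆ L) :
    IsNormalIn n G H₀ := by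
  refine isNormalIn_of_cocompact hGU hΓG hcocompact hH₀.2 fun γ hγ => ?_
  obtain ⟨u, rfl⟩ := isUnit_of_mem_UTset (hGU (hΓG hγ))
  have hγ' : ((u⁻¹ : (Mat n ℝ)ˣ) : Mat n ℝ) ∈ Γ := by
    rw [Matrix.coe_units_inv]
    exact hΓinv _ hγ
  have hmem (A : Mat n ℝ) :
      A ∈ ConjAct.toConjAct u⁻¹ • H₀ ↔ u * A * (u : Mat n ℝ)⁻¹ ∈ H₀ := by
    rw [mem_toConjAct_smul_set_iff, inv_inv, Matrix.coe_units_inv]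
  have hstab (S : Submonoid (Mat n ℝ)) (hS : Γ ≤ S) :
      ConjAct.toConjAct u⁻¹ • (S : Set (Mat n ℝ)) = S :=
    toConjAct_smul_coe_submonoid (hS hγ') (by simpa using hS hγ)
  have hLG : ConjAct.toConjAct u⁻¹ • H₀ ⊆ G := (Set.smul_set_mono hH₀.1).trans (hstab G hΓG).le
  have hLalg : IsRealAlgSubgroup n G (ConjAct.toConjAct u⁻¹ • H₀) :=
    ⟨hLG, hH₀.2.smul (hGU (hΓG hγ'))⟩
  have hLrat : IsRationalFor n Γ (ConjAct.toConjAct u⁻¹ • H₀) := hH₀rat.smul (hstab Γ le_rfl)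
  have hHL : H ⊆ ConjAct.toConjAct u⁻¹ • H₀ := fun h hh => (hmem h).2 (hHH₀ (hH _ hγ h hh))
  exact fun x hx => (hmem x).1 (hH₀min _ hLalg hLrat hHL hx)

end Normality

/-- the smallest `Γ`-rational subgroup containing a normal subgroup is normal. -/
theorem stmt9 {n : ℕ} (G : Set (Mat n ℝ)) (hG : IsRealUnipotentGroup n G)
    (Γ : Set (Mat n ℝ)) (hΓ : IsLatticeIn n G Γ)
    (H : Set (Mat n ℝ)) (hH : IsRealAlgSubgroup n G H) (hHnormal : IsNormalIn n G H)
    (H₀ : Set (Mat n ℝ)) (hH₀ : IsRealAlgSubgroup n G H₀) (hHH₀ : H ⊆ H₀)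
    (hH₀rat : IsRationalFor n Γ H₀)
    (hH₀min : ∀ L : Set (Mat n ℝ), IsRealAlgSubgroup n G L → IsRationalFor n Γ L → H ⊆ L →
      H₀ ⊆ L) :
    IsNormalIn n G H₀ :=
  stmt9_general (G := hG.submonoid) (Γ := hΓ.submonoid) hG.subset_UTset hΓ.1 hΓ.2.2.2.1
    hΓ.exists_isCompact_subset_mul (fun γ hγ => hHnormal γ (hΓ.1 hγ)) hH₀ hHH₀ hH₀rat hH₀min
end
end
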